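/- Let n ≥ 1, let a ∈ L^∞(ℝⁿ;ℂ), and let η ∈ ℝⁿ be a Lebesgue point of a. Let ρ > 1 and let φ ∈ C_c^∞(ℝⁿ) be even and satisfy 0 ≤ φ ≤ 1, φ(x) = 1 for |x| ≤ 1, and φ(x) = 0 for |x| ≥ ρ. For δ > 0 and y ∈ ℝⁿ define f_{δ,η,y}(x) := e^{i η·(x−y)} φ(δ(x−y)). Then for every ε > 0 there exists δ_ε > 0 such that for all δ ∈ (0, δ_ε) and all x, y ∈ ℝⁿ, |(F^{-1}(a · F f_{δ,η,y}))(x) − a(η) f_{δ,η,y}(x)| < ε, where F f_{δ,η,y} is a Schwartz function, hence a · F f_{δ,η,y} ∈ L¹(ℝⁿ) and F^{-1} is applied as a pointwise-defined integral. -/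

import Mathlib

open MeasureTheory Filter Metric Complex ENNReal NNReal

noncomputable section

abbrev Eucl (n : ℕ) := EuclideanSpace ℝ (Fin n)

/-- The Fourier integral of an integrable function, with the convention
`(Fh)(ξ) = ∫ h(x) e^{-i x·ξ} dx`. -/
def fourierInt {n : ℕ} (h : Eucl n → ℂ) (ξ : Eucl n) : ℂ :=
  ∫ x : Eucl n, Complex.exp (-(Complex.I * ((inner ℝ x ξ : ℝ) : ℂ))) * h x

/-- The inverse Fourier integral `(F⁻¹h)(x) = (2π)^{-n} ∫ h(ξ) e^{i x·ξ} dξ`. -/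
def fourierIntInv {n : ℕ} (h : Eucl n → ℂ) (x : Eucl n) : ℂ :=
  (((2 * Real.pi) ^ n : ℝ)⁻¹ : ℂ) •
    ∫ ξ : Eucl n, Complex.exp (Complex.I * ((inner ℝ x ξ : ℝ) : ℂ)) * h ξ

/-- The test function `f_{δ,η,y}(x) = e^{i η·(x-y)} φ(δ(x-y))`. -/
def testFun {n : ℕ} (η y : Eucl n) (δ : ℝ) (φ : Eucl n → ℝ) (x : Eucl n) : ℂ :=
  Complex.exp (Complex.I * ((inner ℝ η (x - y) : ℝ) : ℂ)) * (φ (δ • (x - y)) : ℂ)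

/-!
Write `φ̂ = F φ`, `f = f_{δ,η,y}`. By Fourier inversion the error `F⁻¹(a · F f) - a(η) f` is
`F⁻¹((a - a(η)) · F f)`, so it is at most `(2π)⁻ⁿ ∫ |a - a(η)| |F f|` at every point. Up to a phase,
`F f (η + δζ) = δ⁻ⁿ φ̂(ζ)`, and the substitution `ξ = η + δζ` turns this bound into
`(2π)⁻ⁿ ∫ |a(η + δζ) - a(η)| |φ̂(ζ)| dζ`, which no longer involves `x` or `y`. Over a ball `B(0, r)`
the integral is at most `‖φ̂‖_∞ |B(0, r)|` times the mean of `|a - a(η)|` over `B(η, δr)`, which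
vanishes as `δ → 0`; outside it is at most `‖a - a(η)‖_∞ ∫_{|ζ| ≥ r} |φ̂|`, small for large `r`.
-/

open scoped FourierTransform SchwartzMap Topology

theorem exists_ae_enorm_le_of_memLp_top {X F : Type*} [MeasurableSpace X] [NormedAddCommGroup F]
    {μ : Measure X} {f : X → F} (hf : MemLp f ∞ μ) : ∃ A : ℝ≥0, ∀ᵐ x ∂μ, ‖f x‖ₑ ≤ A := by
  refine ⟨(eLpNorm f ∞ μ).toNNReal, ?_⟩
  rw [coe_toNNReal hf.eLpNorm_ne_top, eLpNorm_exponent_top]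
  exact enorm_ae_le_eLpNormEssSup f μ

theorem tendsto_setLIntegral_compl_ball_atTop {X : Type*} [PseudoMetricSpace X]
    [MeasurableSpace X] [OpensMeasurableSpace X] {μ : Measure X} {g : X → ℝ≥0∞}
    (hg : ∫⁻ z, g z ∂μ ≠ ∞) (x : X) :
    Tendsto (fun r : ℝ => ∫⁻ z in (ball x r)ᶜ, g z ∂μ) atTop (𝓝 0) := by
  have measurable_compl (r : ℝ) : MeasurableSet (ball x r)ᶜ := measurableSet_ball.compl
  have iInter_compl : ⋂ r : ℝ, (ball x r)ᶜ = ∅ := by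
    rw [← Set.compl_iUnion, Set.compl_empty_iff]
    exact Set.iUnion_eq_univ_iff.2 fun z => ⟨dist z x + 1, mem_ball.2 (lt_add_one _)⟩
  have tendsto_measure := tendsto_measure_iInter_atTop (μ := μ.withDensity g)
    (fun r => (measurable_compl r).nullMeasurableSet)
    (fun r s hrs => Set.compl_subset_compl.2 (ball_subset_ball hrs))
    ⟨0, by
      rw [withDensity_apply _ (measurable_compl 0)]
      exact ne_top_of_le_ne_top hg (setLIntegral_le_lintegral _ _)⟩
  rw [iInter_compl, measure_empty] at tendsto_measure
  exact tendsto_measure.congr fun r => withDensity_apply _ (measurable_compl r)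

section Dilation

variable {E : Type*} [NormedAddCommGroup E] [NormedSpace ℝ E] {δ : ℝ}

theorem preimage_add_smul_ball (η : E) (hδ : 0 < δ) (r : ℝ) :
    (fun ζ : E => η + δ • ζ) ⁻¹' ball η (δ * r) = ball 0 r := by
  ext ζ
  simp [dist_eq_norm, norm_smul, abs_of_pos hδ, hδ]

variable [MeasurableSpace E] [BorelSpace E]

theorem measurableEmbedding_add_smul (η : E) (hδ : δ ≠ 0) :
    MeasurableEmbedding fun ζ : E => η + δ • ζ :=
  (measurableEmbedding_addLeft η).comp (measurableEmbedding_const_smul₀ hδ)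

variable [FiniteDimensional ℝ E] (μ : Measure E) [μ.IsAddHaarMeasure]

theorem map_add_smul_addHaar (η : E) (hδ : δ ≠ 0) :
    μ.map (fun ζ => η + δ • ζ) = ENNReal.ofReal |(δ ^ Module.finrank ℝ E)⁻¹| • μ := by
  rw [show (fun ζ => η + δ • ζ) = (η + ·) ∘ (δ • ·) from rfl,
    ← Measure.map_map (measurable_const_add η) (measurable_const_smul δ),
    Measure.map_addHaar_smul μ hδ, Measure.map_smul, map_add_left_eq_self]

theorem quasiMeasurePreserving_add_smul (η : E) (hδ : δ ≠ 0) :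
    Measure.QuasiMeasurePreserving (fun ζ : E => η + δ • ζ) μ μ := by
  refine ⟨(measurableEmbedding_add_smul η hδ).measurable, ?_⟩
  rw [map_add_smul_addHaar μ η hδ]
  exact Measure.smul_absolutelyContinuous

theorem lintegral_comp_add_smul (η : E) (hδ : δ ≠ 0) (u : E → ℝ≥0∞) :
    ∫⁻ ζ, u (η + δ • ζ) ∂μ =
      ENNReal.ofReal |(δ ^ Module.finrank ℝ E)⁻¹| * ∫⁻ ξ, u ξ ∂μ := by
  rw [← (measurableEmbedding_add_smul η hδ).lintegral_map, map_add_smul_addHaar μ η hδ,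
    lintegral_smul_measure, smul_eq_mul]

theorem integrable_comp_add_smul_iff {F : Type*} [NormedAddCommGroup F] (η : E) (hδ : δ ≠ 0)
    {f : E → F} : Integrable (fun ζ => f (η + δ • ζ)) μ ↔ Integrable f μ := by
  rw [integrable_comp_smul_iff μ (fun ζ => f (η + ζ)) hδ]
  exact ⟨fun h => by simpa using h.comp_add_left (-η), fun h => h.comp_add_left η⟩

theorem setLIntegral_ball_comp_add_smul (η : E) (hδ : 0 < δ) (r : ℝ) (u : E → ℝ≥0∞) :
    ∫⁻ ζ in ball 0 r, u (η + δ • ζ) ∂μ = μ (ball 0 r) * ⨍⁻ ξ in ball η (δ * r), u ξ ∂μ := by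
  have restrict_map : (μ.restrict (ball 0 r)).map (fun ζ => η + δ • ζ) =
      ENNReal.ofReal |(δ ^ Module.finrank ℝ E)⁻¹| • μ.restrict (ball η (δ * r)) := by
    rw [← preimage_add_smul_ball η hδ, ← (measurableEmbedding_add_smul η hδ.ne').restrict_map,
      map_add_smul_addHaar μ η hδ.ne', Measure.restrict_smul]
  have measure_ball_eq :
      μ (ball 0 r) = ENNReal.ofReal |(δ ^ Module.finrank ℝ E)⁻¹| * μ (ball η (δ * r)) := by
    simpa [(measurableEmbedding_add_smul η hδ.ne').map_apply, preimage_add_smul_ball η hδ]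
      using congrArg (· Set.univ) restrict_map
  rw [← (measurableEmbedding_add_smul η hδ.ne').lintegral_map, restrict_map,
    lintegral_smul_measure, smul_eq_mul, measure_ball_eq, mul_assoc,
    measure_mul_setLAverage _ measure_ball_lt_top.ne]

end Dilation

section ApproximateIdentity

variable {E : Type*} [NormedAddCommGroup E] [NormedSpace ℝ E] [FiniteDimensional ℝ E]
  [MeasurableSpace E] [BorelSpace E] {μ : Measure E} [μ.IsAddHaarMeasure]
  {u g : E → ℝ≥0∞} {η : E} {A K : ℝ≥0}

theorem lintegral_comp_add_smul_mul_le (hu : ∀ᵐ ξ ∂μ, u ξ ≤ A) (hg : ∀ ζ, g ζ ≤ K)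
    {δ : ℝ} (hδ : 0 < δ) (r : ℝ) :
    ∫⁻ ζ, u (η + δ • ζ) * g ζ ∂μ ≤
      K * μ (ball 0 r) * ⨍⁻ ξ in ball η (δ * r), u ξ ∂μ + A * ∫⁻ ζ in (ball 0 r)ᶜ, g ζ ∂μ := by
  rw [← lintegral_add_compl _ (measurableSet_ball (x := (0 : E)) (ε := r))]
  gcongr
  · calc ∫⁻ ζ in ball 0 r, u (η + δ • ζ) * g ζ ∂μ
        ≤ ∫⁻ ζ in ball 0 r, K * u (η + δ • ζ) ∂μ :=
          lintegral_mono fun ζ => by rw [mul_comm]; gcongr; exact hg ζ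
      _ = K * μ (ball 0 r) * ⨍⁻ ξ in ball η (δ * r), u ξ ∂μ := by
          rw [lintegral_const_mul' _ _ coe_ne_top, setLIntegral_ball_comp_add_smul μ η hδ,
            mul_assoc]
  · rw [← lintegral_const_mul' _ _ coe_ne_top]
    refine lintegral_mono_ae (ae_restrict_of_ae ?_)
    filter_upwards [(quasiMeasurePreserving_add_smul μ η hδ.ne').ae hu] with ζ hζ
    gcongr

theorem tendsto_lintegral_comp_add_smul_mul_of_tendsto_setLAverage
    (hu : ∀ᵐ ξ ∂μ, u ξ ≤ A)
    (hη : Tendsto (fun R : ℝ => ⨍⁻ ξ in ball η R, u ξ ∂μ) (𝓝[>] 0) (𝓝 0))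
    (hgK : ∀ ζ, g ζ ≤ K) (hg : ∫⁻ ζ, g ζ ∂μ ≠ ∞) :
    Tendsto (fun δ : ℝ => ∫⁻ ζ, u (η + δ • ζ) * g ζ ∂μ) (𝓝[>] 0) (𝓝 0) := by
  refine ENNReal.tendsto_nhds_zero.2 fun ε hε => ?_
  have half_pos : 0 < ε / 2 := ENNReal.half_pos hε.ne'
  have tail_tendsto :
      Tendsto (fun r : ℝ => A * ∫⁻ ζ in (ball 0 r)ᶜ, g ζ ∂μ) atTop (𝓝 0) := by
    simpa using ENNReal.Tendsto.const_mul (tendsto_setLIntegral_compl_ball_atTop hg 0)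
      (.inr coe_ne_top)
  obtain ⟨r, tail_le, hr⟩ :=
    ((ENNReal.tendsto_nhds_zero.1 tail_tendsto _ half_pos).and (eventually_gt_atTop 0)).exists
  have ball_tendsto : Tendsto (fun R : ℝ => K * μ (ball 0 r) * ⨍⁻ ξ in ball η R, u ξ ∂μ)
      (𝓝[>] 0) (𝓝 0) := by
    simpa using ENNReal.Tendsto.const_mul hη
      (.inr (mul_ne_top coe_ne_top measure_ball_lt_top.ne))
  have ball_le := eventually_nhdsGT_zero_mul_left hr
    (ENNReal.tendsto_nhds_zero.1 ball_tendsto _ half_pos)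
  filter_upwards [ball_le, self_mem_nhdsWithin] with δ ball_le hδ
  rw [mul_comm r] at ball_le
  calc ∫⁻ ζ, u (η + δ • ζ) * g ζ ∂μ
      ≤ K * μ (ball 0 r) * ⨍⁻ ξ in ball η (δ * r), u ξ ∂μ
          + A * ∫⁻ ζ in (ball 0 r)ᶜ, g ζ ∂μ := lintegral_comp_add_smul_mul_le hu hgK hδ r
    _ ≤ ε / 2 + ε / 2 := add_le_add ball_le tail_le
    _ = ε := ENNReal.add_halves ε

end ApproximateIdentity

theorem enorm_exp_neg_I_mul_ofReal (t : ℝ) : ‖exp (-(I * t))‖ₑ = 1 := by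
  rw [← mul_neg, ← ofReal_neg, enorm_exp_I_mul_ofReal]

theorem integrable_exp_I_mul_ofReal_mul {X : Type*} [MeasurableSpace X] {μ : Measure X}
    {t : X → ℝ} {h : X → ℂ} (ht : AEMeasurable t μ) (hh : Integrable h μ) :
    Integrable (fun x => exp (I * t x) * h x) μ :=
  hh.bdd_mul (c := 1) (by fun_prop) (ae_of_all _ fun _ => (norm_exp_I_mul_ofReal _).le)

section FourierIntegral

variable {n : ℕ} {h k : Eucl n → ℂ}

theorem fourierInt_eq_fourier (h : Eucl n → ℂ) (ξ : Eucl n) :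
    fourierInt h ξ = 𝓕 h ((2 * Real.pi)⁻¹ • ξ) := by
  rw [fourierInt, Real.fourier_eq']
  congr 1 with x
  have phase : -2 * Real.pi * inner ℝ x ((2 * Real.pi)⁻¹ • ξ) = -inner ℝ x ξ := by
    rw [inner_smul_right]
    field_simp
  rw [phase, smul_eq_mul, ofReal_neg, neg_mul, mul_comm I]

theorem fourierIntInv_eq_fourierInv (h : Eucl n → ℂ) (x : Eucl n) :
    fourierIntInv h x = 𝓕⁻ (fun w => h ((2 * Real.pi) • w)) x := by
  have change_of_variables := Measure.integral_comp_smul (volume : Measure (Eucl n))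
    (fun ξ => exp (I * (inner ℝ x ξ : ℝ)) * h ξ) (2 * Real.pi)
  rw [finrank_euclideanSpace_fin, abs_of_pos (by positivity)] at change_of_variables
  rw [fourierIntInv, Real.fourierInv_eq', ← ofReal_inv, Complex.coe_smul, ← change_of_variables]
  congr 1 with w
  rw [inner_smul_right, real_inner_comm, smul_eq_mul, mul_comm I]

theorem fourierIntInv_fourierInt (hcont : Continuous h) (hint : Integrable h)
    (hhat : Integrable (fourierInt h)) (x : Eucl n) : fourierIntInv (fourierInt h) x = h x := by
  have rescale : (fun w => fourierInt h ((2 * Real.pi) • w)) = 𝓕 h := by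
    ext w
    rw [fourierInt_eq_fourier, inv_smul_smul₀ (by positivity)]
  have integrable_fourier : Integrable (𝓕 h) :=
    rescale ▸ (integrable_comp_smul_iff volume _ (by positivity)).2 hhat
  rw [fourierIntInv_eq_fourierInv, rescale, hcont.fourierInv_fourier_eq hint integrable_fourier]

theorem integrable_fourierInt_schwartzMap (f : 𝓢(Eucl n, ℂ)) : Integrable (fourierInt f) := by
  have fourierInt_eq : fourierInt f = fun ξ => (𝓕 f) ((2 * Real.pi)⁻¹ • ξ) := by
    ext ξ
    rw [fourierInt_eq_fourier, SchwartzMap.fourier_coe]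
  rw [fourierInt_eq]
  exact (integrable_comp_smul_iff volume _ (by positivity)).2 (𝓕 f).integrable

theorem integrable_fourierInt_of_contDiff_of_hasCompactSupport (hsmooth : ContDiff ℝ (⊤ : ℕ∞) h)
    (hsupp : HasCompactSupport h) : Integrable (fourierInt h) :=
  integrable_fourierInt_schwartzMap (hsupp.toSchwartzMap hsmooth)

theorem enorm_fourierInt_le (h : Eucl n → ℂ) (ξ : Eucl n) :
    ‖fourierInt h ξ‖ₑ ≤ ∫⁻ x, ‖h x‖ₑ := by
  refine (enorm_integral_le_lintegral_enorm _).trans_eq ?_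
  simp only [enorm_mul, enorm_exp_neg_I_mul_ofReal, one_mul]

theorem enorm_fourierIntInv_le (h : Eucl n → ℂ) (x : Eucl n) :
    ‖fourierIntInv h x‖ₑ ≤ ‖((2 * Real.pi) ^ n)⁻¹‖ₑ * ∫⁻ ξ, ‖h ξ‖ₑ := by
  rw [fourierIntInv, ← ofReal_inv, Complex.coe_smul, enorm_smul]
  gcongr
  refine (enorm_integral_le_lintegral_enorm _).trans_eq ?_
  simp only [enorm_mul, enorm_exp_I_mul_ofReal, one_mul]

theorem fourierIntInv_sub (hh : Integrable h) (hk : Integrable k) (x : Eucl n) :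
    fourierIntInv (fun ξ => h ξ - k ξ) x = fourierIntInv h x - fourierIntInv k x := by
  simp only [fourierIntInv, mul_sub]
  rw [integral_sub (integrable_exp_I_mul_ofReal_mul (by fun_prop) hh)
    (integrable_exp_I_mul_ofReal_mul (by fun_prop) hk), smul_sub]

theorem fourierIntInv_const_mul (c : ℂ) (h : Eucl n → ℂ) (x : Eucl n) :
    fourierIntInv (fun ξ => c * h ξ) x = c * fourierIntInv h x := by
  simp only [fourierIntInv, mul_left_comm _ c, integral_const_mul, smul_eq_mul]

theorem enorm_fourierIntInv_mul_fourierInt_sub_le {a : Eucl n → ℂ} (ha : MemLp a ∞)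
    (hcont : Continuous h) (hint : Integrable h) (hhat : Integrable (fourierInt h))
    (c : ℂ) (x : Eucl n) :
    ‖fourierIntInv (fun ξ => a ξ * fourierInt h ξ) x - c * h x‖ₑ ≤
      ‖((2 * Real.pi) ^ n)⁻¹‖ₑ * ∫⁻ ξ, ‖a ξ - c‖ₑ * ‖fourierInt h ξ‖ₑ := by
  have integrable_mul : Integrable fun ξ => a ξ * fourierInt h ξ := hhat.mul_of_top_right ha
  have error_eq : fourierIntInv (fun ξ => a ξ * fourierInt h ξ) x - c * h x =
      fourierIntInv (fun ξ => (a ξ - c) * fourierInt h ξ) x := by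
    rw [← fourierIntInv_fourierInt hcont hint hhat x, ← fourierIntInv_const_mul,
      ← fourierIntInv_sub integrable_mul (hhat.const_mul c)]
    simp only [sub_mul]
  rw [error_eq]
  simpa only [enorm_mul] using
    enorm_fourierIntInv_le (fun ξ => (a ξ - c) * fourierInt h ξ) x

end FourierIntegral

section TestFunction

variable {n : ℕ} {φ : Eucl n → ℝ} {δ : ℝ}

theorem continuous_testFun (hφ : Continuous φ) (η y : Eucl n) (δ : ℝ) :
    Continuous (testFun η y δ φ) := by
  unfold testFun
  fun_prop

theorem integrable_testFun (hφ : Integrable φ) (η y : Eucl n) (hδ : δ ≠ 0) :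
    Integrable (testFun η y δ φ) := by
  have integrable_dilated : Integrable fun x => (φ (δ • (x - y)) : ℂ) :=
    (((integrable_comp_smul_iff volume φ hδ).2 hφ).comp_sub_right y).ofReal
  exact integrable_exp_I_mul_ofReal_mul (by fun_prop) integrable_dilated

theorem fourierInt_testFun_add_smul (φ : Eucl n → ℝ) (η y ζ : Eucl n) (δ : ℝ) :
    fourierInt (testFun η y δ φ) (η + δ • ζ) =
      |(δ ^ n)⁻¹| • (exp (-(I * (inner ℝ y (η + δ • ζ) : ℝ))) *
        fourierInt (fun x => (φ x : ℂ)) ζ) := by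
  have change_of_variables := Measure.integral_comp_smul (volume : Measure (Eucl n))
    (fun v => exp (-(I * (inner ℝ v ζ : ℝ))) * (φ v : ℂ)) δ
  rw [finrank_euclideanSpace_fin] at change_of_variables
  rw [← mul_smul_comm, fourierInt, fourierInt, ← change_of_variables, ← integral_const_mul,
    ← integral_add_right_eq_self _ y]
  congr 1 with u
  simp only [testFun, add_sub_cancel_right, ← mul_assoc, ← exp_add, inner_add_left,
    inner_add_right, real_inner_smul_left, real_inner_smul_right, real_inner_comm u η]
  congr 2
  push_cast
  ring

theorem enorm_fourierInt_testFun_add_smul (φ : Eucl n → ℝ) (η y ζ : Eucl n) (δ : ℝ) :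
    ‖fourierInt (testFun η y δ φ) (η + δ • ζ)‖ₑ =
      ENNReal.ofReal |(δ ^ n)⁻¹| * ‖fourierInt (fun x => (φ x : ℂ)) ζ‖ₑ := by
  rw [fourierInt_testFun_add_smul, enorm_smul, enorm_mul, enorm_exp_neg_I_mul_ofReal, one_mul,
    Real.enorm_of_nonneg (abs_nonneg _)]

theorem integrable_fourierInt_testFun (hφhat : Integrable (fourierInt fun x => (φ x : ℂ)))
    (η y : Eucl n) (hδ : δ ≠ 0) : Integrable (fourierInt (testFun η y δ φ)) := by
  rw [← integrable_comp_add_smul_iff volume η hδ]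
  simp only [fourierInt_testFun_add_smul, ← mul_neg, ← ofReal_neg]
  exact (integrable_exp_I_mul_ofReal_mul (t := fun ζ => -inner ℝ y (η + δ • ζ)) (by fun_prop)
    hφhat).smul |(δ ^ n)⁻¹|

theorem lintegral_mul_enorm_fourierInt_testFun (u : Eucl n → ℝ≥0∞) (φ : Eucl n → ℝ)
    (η y : Eucl n) (hδ : δ ≠ 0) :
    ∫⁻ ξ, u ξ * ‖fourierInt (testFun η y δ φ) ξ‖ₑ =
      ∫⁻ ζ, u (η + δ • ζ) * ‖fourierInt (fun x => (φ x : ℂ)) ζ‖ₑ := by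
  have jacobian_ne_zero : ENNReal.ofReal |(δ ^ n)⁻¹| ≠ 0 := by
    simp [pow_pos, abs_pos.2 hδ]
  have change_of_variables := lintegral_comp_add_smul volume η hδ
    (fun ξ => u ξ * ‖fourierInt (testFun η y δ φ) ξ‖ₑ)
  simp only [enorm_fourierInt_testFun_add_smul, mul_left_comm (u _),
    finrank_euclideanSpace_fin] at change_of_variables
  rw [lintegral_const_mul' _ _ ofReal_ne_top] at change_of_variables
  exact ((ENNReal.mul_right_inj jacobian_ne_zero ofReal_ne_top).1 change_of_variables).symm

end TestFunction

theorem approx_at_Lebesgue_point_general {n : ℕ} {a : Eucl n → ℂ} (ha : MemLp a ∞) {η : Eucl n}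
    (hη : Tendsto (fun R : ℝ => ⨍⁻ ξ in ball η R, ‖a ξ - a η‖ₑ ∂volume) (𝓝[>] 0) (𝓝 0))
    {φ : Eucl n → ℝ} (hφcont : Continuous φ) (hφint : Integrable φ)
    (hφhat : Integrable (fourierInt fun x => (φ x : ℂ))) {ε : ℝ} (hε : 0 < ε) :
    ∃ δε : ℝ, 0 < δε ∧ ∀ δ : ℝ, 0 < δ → δ < δε → ∀ x y : Eucl n,
      ‖fourierIntInv (fun ξ => a ξ * fourierInt (testFun η y δ φ) ξ) x
        - a η * testFun η y δ φ x‖ < ε := by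
  obtain ⟨A, hA⟩ := exists_ae_enorm_le_of_memLp_top (ha.sub (memLp_top_const (a η)))
  obtain ⟨K, hK⟩ : ∃ K : ℝ≥0, ∀ ζ, ‖fourierInt (fun x => (φ x : ℂ)) ζ‖ₑ ≤ K :=
    ⟨_, fun ζ => (enorm_fourierInt_le _ ζ).trans_eq (coe_toNNReal hφint.ofReal.2.ne).symm⟩
  have error_tendsto := ENNReal.Tendsto.const_mul (a := ‖((2 * Real.pi) ^ n)⁻¹‖ₑ)
    (tendsto_lintegral_comp_add_smul_mul_of_tendsto_setLAverage hA hη hK hφhat.2.ne)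
    (.inr enorm_ne_top)
  rw [mul_zero] at error_tendsto
  obtain ⟨δε, hδε, error_lt⟩ := mem_nhdsGT_iff_exists_Ioo_subset.1
    (error_tendsto.eventually_lt_const (ENNReal.ofReal_pos.2 hε))
  refine ⟨δε, hδε, fun δ hδ hlt x y => ?_⟩
  rw [← ENNReal.ofReal_lt_ofReal_iff hε, ofReal_norm]
  refine (enorm_fourierIntInv_mul_fourierInt_sub_le ha (continuous_testFun hφcont η y δ)
    (integrable_testFun hφint η y hδ.ne') (integrable_fourierInt_testFun hφhat η y hδ.ne')
    (a η) x).trans_lt ?_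
  rw [lintegral_mul_enorm_fourierInt_testFun (fun ξ => ‖a ξ - a η‖ₑ) φ η y hδ.ne']
  exact error_lt ⟨hδ, hlt⟩

/-- at a Lebesgue point `η` of `a ∈ L^∞(ℝⁿ;ℂ)`, the functions
`F⁻¹(a · F f_{δ,η,y})` converge to `a(η) f_{δ,η,y}` uniformly in `x` and `y` as `δ → 0⁺`. -/
theorem approx_at_Lebesgue_point (n : ℕ) (hn : 1 ≤ n)
    (a : Eucl n → ℂ) (ha : MemLp a ⊤ (volume : Measure (Eucl n))) (η : Eucl n)
    (hη : Tendsto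
      (fun R : ℝ => (volume (ball η R))⁻¹ * ∫⁻ ξ in ball η R, (‖a ξ - a η‖₊ : ℝ≥0∞))
      (nhdsWithin 0 (Set.Ioi 0)) (nhds 0))
    (ρ : ℝ) (hρ : 1 < ρ) (φ : Eucl n → ℝ) (hφsmooth : ContDiff ℝ (⊤ : ℕ∞) φ)
    (hφsupp : HasCompactSupport φ) (hφeven : ∀ x, φ (-x) = φ x)
    (hφ0 : ∀ x, 0 ≤ φ x) (hφ1 : ∀ x, φ x ≤ 1)
    (hφone : ∀ x : Eucl n, ‖x‖ ≤ 1 → φ x = 1)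
    (hφzero : ∀ x : Eucl n, ρ ≤ ‖x‖ → φ x = 0) :
    ∀ ε : ℝ, 0 < ε → ∃ δε : ℝ, 0 < δε ∧ ∀ δ : ℝ, 0 < δ → δ < δε → ∀ x y : Eucl n,
      ‖fourierIntInv (fun ξ => a ξ * fourierInt (testFun η y δ φ) ξ) x
        - a η * testFun η y δ φ x‖ < ε := by
  intro ε hε
  exact approx_at_Lebesgue_point_general ha
    (by simpa only [setLAverage_eq, ENNReal.div_eq_inv_mul, enorm_eq_nnnorm] using hη)
    hφsmooth.continuous (hφsmooth.continuous.integrable_of_hasCompactSupport hφsupp)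
    (integrable_fourierInt_of_contDiff_of_hasCompactSupport
      (ofRealCLM.contDiff.comp hφsmooth) (hφsupp.comp_left Complex.ofReal_zero)) hε

end
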